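/- arXiv:1306.4299 — 6 statements merged into one kernel-verified Lean document; each statement's English description precedes it below -/
import Mathlib

section
/- Let G be a connected finite simple graph on n vertices and let S = S_1 ∪ … ∪ S_k be an equitable partition of V(G). Then for every α ∈ (0, π/2), S is an α-Kuramoto partition of G; that is, there exists a solution θ_1, …, θ_n of the frustrated Kuramoto model on G such that θ_i(t) = θ_j(t) for all t ≥ 0 whenever i and j lie in the same part, and θ_i ≠ θ_j as functions on [0,∞) whenever i and j lie in different parts. -/
open scoped Classical

/-- The right-hand side of the frustrated Kuramoto model at vertex `i`, time `t`:
`∑_j A_{i,j} sin(θ_j(t) - θ_i(t) - α)`. -/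
noncomputable def kuramotoDeriv {n : ℕ} (G : SimpleGraph (Fin n)) (α : ℝ)
    (θ : Fin n → ℝ → ℝ) (i : Fin n) (t : ℝ) : ℝ :=
  ∑ j : Fin n, if G.Adj i j then Real.sin (θ j t - θ i t - α) else 0

/-- `θ` is a solution of the frustrated Kuramoto model on `G` with frustration `α`:
each `θ i` is differentiable on `[0, ∞)` with derivative given by the Kuramoto
right-hand side. -/
def IsKuramotoSol {n : ℕ} (G : SimpleGraph (Fin n)) (α : ℝ)
    (θ : Fin n → ℝ → ℝ) : Prop :=
  ∀ i : Fin n, ∀ t ∈ Set.Ici (0 : ℝ),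
    HasDerivWithinAt (θ i) (kuramotoDeriv G α θ i t) (Set.Ici 0) t

/-- The partition of `Fin n` given by the fibres of `P : Fin n → Fin k` is equitable:
the number of neighbours in part `m` of a vertex `u` depends only on the part of `u`. -/
def IsEquitable {n k : ℕ} (G : SimpleGraph (Fin n)) (P : Fin n → Fin k) : Prop :=
  ∀ u v : Fin n, P u = P v → ∀ m : Fin k,
    (Finset.univ.filter fun w => G.Adj u w ∧ P w = m).card =
      (Finset.univ.filter fun w => G.Adj v w ∧ P w = m).card

/-- The partition given by the fibres of `P` is an `α`-Kuramoto partition: there is a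
solution of the frustrated Kuramoto model whose phases agree (for all `t ≥ 0`) exactly
within the parts. -/
def IsAlphaKuramoto {n k : ℕ} (G : SimpleGraph (Fin n)) (α : ℝ)
    (P : Fin n → Fin k) : Prop :=
  ∃ θ : Fin n → ℝ → ℝ, IsKuramotoSol G α θ ∧
    (∀ i j : Fin n, P i = P j → Set.EqOn (θ i) (θ j) (Set.Ici 0)) ∧
    (∀ i j : Fin n, P i ≠ P j → ¬ Set.EqOn (θ i) (θ j) (Set.Ici 0))

theorem kur_sin_lip (x y : ℝ) : |Real.sin x - Real.sin y| ≤ |x - y| := by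
  have h : LipschitzWith 1 Real.sin := by
    apply lipschitzWith_of_nnnorm_deriv_le Real.differentiable_sin
    intro x
    rw [← NNReal.coe_le_coe]
    simpa using Real.abs_cos_le_one x
  have := h.dist_le_mul x y
  simpa [Real.dist_eq] using this

theorem kur_global {E : Type*} [NormedAddCommGroup E] [NormedSpace ℝ E] [CompleteSpace E]
    (F : E → E) (L K : NNReal) (hb : ∀ x, ‖F x‖ ≤ L) (hl : LipschitzWith K F) (x₀ : E) :
    ∃ X : ℝ → E, X 0 = x₀ ∧
      ∀ t ∈ Set.Ici (0 : ℝ), HasDerivWithinAt X (F (X t)) (Set.Ici 0) t := by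
  have h1 : ∀ N : ℕ, ∃ x : ℝ → E, x 0 = x₀ ∧
      ∀ t ∈ Set.Icc (0 : ℝ) N, HasDerivWithinAt x (F (x t)) (Set.Icc 0 (N : ℝ)) t := by
    intro N
    have hpl : IsPicardLindelof (fun _ : ℝ => F)
        (⟨0, ⟨le_rfl, Nat.cast_nonneg N⟩⟩ : Set.Icc (0 : ℝ) N) x₀ (L * N) 0 L K :=
      IsPicardLindelof.of_time_independent (fun x _ => hb x) hl.lipschitzOnWith (by simp)
    exact hpl.exists_eq_forall_mem_Icc_hasDerivWithinAt₀
  choose x hx0 hx using h1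
  have hright : ∀ N : ℕ, ∀ b : ℝ, b ≤ N → ∀ t ∈ Set.Ico (0 : ℝ) b,
      HasDerivWithinAt (x N) (F (x N t)) (Set.Ici t) t := by
    intro N b hbN t ht
    have h := hx N t ⟨ht.1, ht.2.le.trans hbN⟩
    exact h.mono_of_mem_nhdsWithin (Filter.mem_of_superset
      (Icc_mem_nhdsGE (ht.2.trans_le hbN)) (Set.Icc_subset_Icc_left ht.1))
  have huniq : ∀ M N : ℕ, M ≤ N → Set.EqOn (x M) (x N) (Set.Icc 0 (M : ℝ)) := by
    intro M N hMN
    have hMN' : (M : ℝ) ≤ N := by exact_mod_cast hMN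
    refine ODE_solution_unique (v := fun _ => F) (K := K) (fun _ => hl) ?_ ?_ ?_ ?_ ?_
    · exact fun t ht => (hx M t ht).continuousWithinAt
    · exact hright M M le_rfl
    · exact fun t ht => ((hx N t ⟨ht.1, ht.2.trans hMN'⟩).continuousWithinAt).mono
        (Set.Icc_subset_Icc_right hMN')
    · exact hright N M hMN'
    · rw [hx0, hx0]
  refine ⟨fun t => x (⌊t⌋₊ + 1) t, by simp [hx0], ?_⟩
  intro t ht
  have ht0 : (0 : ℝ) ≤ t := ht
  have hlt : t < ((⌊t⌋₊ + 1 : ℕ) : ℝ) := by exact_mod_cast Nat.lt_floor_add_one t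
  have h := hx (⌊t⌋₊ + 1) t ⟨ht0, hlt.le⟩
  have hnh : Set.Icc (0 : ℝ) ((⌊t⌋₊ + 1 : ℕ) : ℝ) ∈ nhdsWithin t (Set.Ici 0) := by
    filter_upwards [self_mem_nhdsWithin, mem_nhdsWithin_of_mem_nhds (Iio_mem_nhds hlt)]
      with s hs hs'
    exact ⟨hs, le_of_lt hs'⟩
  refine (h.mono_of_mem_nhdsWithin hnh).congr_of_eventuallyEq ?_ rfl
  filter_upwards [self_mem_nhdsWithin, mem_nhdsWithin_of_mem_nhds (Iio_mem_nhds hlt)]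
      with s hs hs'
  have hs0 : (0 : ℝ) ≤ s := hs
  have hfl : ⌊s⌋₊ + 1 ≤ ⌊t⌋₊ + 1 := (Nat.floor_lt hs0).2 hs'
  refine huniq _ _ hfl ⟨hs0, ?_⟩
  have := (Nat.lt_floor_add_one s).le
  exact_mod_cast this

/-- **Theorem (equitable ⟹ α-Kuramoto).** Every equitable partition of a connected graph
is an `α`-Kuramoto partition, for every `α ∈ (0, π/2)`. -/
theorem equitable_isAlphaKuramoto {n k : ℕ} (G : SimpleGraph (Fin n))
    (hconn : G.Connected) (P : Fin n → Fin k) (hsurj : Function.Surjective P)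
    (heq : IsEquitable G P) (α : ℝ) (hα : α ∈ Set.Ioo 0 (Real.pi / 2)) :
    IsAlphaKuramoto G α P := by
  choose s hs using hsurj
  let F : (Fin k → ℝ) → (Fin k → ℝ) := fun φ m =>
    ∑ w : Fin n, if G.Adj (s m) w then Real.sin (φ (P w) - φ m - α) else 0
  have hb : ∀ φ, ‖F φ‖ ≤ ((n : NNReal) : ℝ) := by
    intro φ
    refine (pi_norm_le_iff_of_nonneg (by positivity)).2 fun m => ?_
    refine (norm_sum_le _ _).trans ?_
    refine (Finset.sum_le_card_nsmul _ _ 1 ?_).trans (by simp)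
    intro w _
    split_ifs
    · exact Real.abs_sin_le_one _
    · simp
  have hl : LipschitzWith ((n : NNReal) * 2) F := by
    refine LipschitzWith.of_dist_le_mul fun φ ψ => ?_
    refine (dist_pi_le_iff (by positivity)).2 fun m => ?_
    rw [Real.dist_eq, ← Finset.sum_sub_distrib]
    refine (Finset.abs_sum_le_sum_abs _ _).trans ?_
    refine (Finset.sum_le_card_nsmul _ _ (2 * dist φ ψ) ?_).trans
      (by simp [mul_assoc])
    intro w _
    split_ifs
    · refine (kur_sin_lip _ _).trans ?_
      have h1 := dist_le_pi_dist φ ψ (P w)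
      have h2 := dist_le_pi_dist φ ψ m
      rw [Real.dist_eq] at h1 h2
      have h3 := abs_sub (φ (P w) - ψ (P w)) (φ m - ψ m)
      have e : φ (P w) - φ m - α - (ψ (P w) - ψ m - α)
        = (φ (P w) - ψ (P w)) - (φ m - ψ m) := by ring
      rw [e]
      linarith
    · simp
  obtain ⟨X, hX0, hX⟩ := kur_global F n ((n : NNReal) * 2) hb hl (fun m => (m : ℕ))
  refine ⟨fun i t => X t (P i), ?_, ?_, ?_⟩
  · intro i t ht
    have h := (hasDerivWithinAt_pi.1 (hX t ht)) (P i)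
    suffices e : kuramotoDeriv G α (fun i t => X t (P i)) i t = F (X t) (P i) by
      rw [e]
      exact h
    have key : ∀ (u : Fin n) (g : Fin k → ℝ),
        (∑ w : Fin n, if G.Adj u w then g (P w) else 0)
          = ∑ m : Fin k, ((Finset.univ.filter fun w => G.Adj u w ∧ P w = m).card : ℝ) * g m := by
      intro u g
      rw [← Finset.sum_filter, ← Finset.sum_fiberwise _ P]
      refine Finset.sum_congr rfl fun m _ => ?_
      rw [Finset.filter_filter, ← nsmul_eq_mul]
      refine Finset.sum_eq_card_nsmul ?_
      intro w hw
      rw [(Finset.mem_filter.1 hw).2.2]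
    change (∑ j : Fin n, if G.Adj i j then Real.sin (X t (P j) - X t (P i) - α) else 0)
      = ∑ w : Fin n, if G.Adj (s (P i)) w then Real.sin (X t (P w) - X t (P i) - α) else 0
    rw [key i (fun m => Real.sin (X t m - X t (P i) - α)),
      key (s (P i)) (fun m => Real.sin (X t m - X t (P i) - α))]
    refine Finset.sum_congr rfl fun m _ => ?_
    rw [heq i (s (P i)) (hs (P i)).symm m]
  · intro i j hij t _
    simp only [hij]
  · intro i j hij h
    have h0 := h (Set.mem_Ici.2 le_rfl)
    simp only [hX0, Nat.cast_inj] at h0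
    exact hij (Fin.ext h0)
end

section
/- Let G be a connected finite simple graph on n vertices with an equitable partition S_1, …, S_k with parameters γ_{i,j}, and let α ∈ (0, π/2). Suppose f_1, …, f_k : [0,∞) → ℝ are differentiable functions satisfying the quotient system f_i'(t) = Σ_{j=1}^k γ_{i,j} sin(f_j(t) − f_i(t) − α) for all t ≥ 0 and i = 1,…,k. Define θ_p(t) := f_i(t) for each vertex p ∈ S_i. Then θ_1, …, θ_n is a solution of the frustrated Kuramoto model on G, i.e. θ_p'(t) = Σ_{q=1}^n A_{p,q} sin(θ_q(t) − θ_p(t) − α) for all t ≥ 0 and all p. -/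
open scoped Classical

/-- **Theorem (lifting solutions of the quotient system).** If `P` is an equitable
partition with parameters `γ` and `f` solves the quotient system
`fᵢ' = ∑ⱼ γᵢⱼ sin(fⱼ - fᵢ - α)` on `[0, ∞)`, then `θ_p := f (P p)` solves the
frustrated Kuramoto model on `G`. -/
theorem quotient_solution_lifts {n k : ℕ} (G : SimpleGraph (Fin n))
    (hconn : G.Connected) (P : Fin n → Fin k) (hsurj : Function.Surjective P)
    (γ : Fin k → Fin k → ℕ)
    (hγ : ∀ u : Fin n, ∀ m : Fin k,
      (Finset.univ.filter fun w => G.Adj u w ∧ P w = m).card = γ (P u) m)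
    (α : ℝ) (hα : α ∈ Set.Ioo 0 (Real.pi / 2))
    (f : Fin k → ℝ → ℝ)
    (hf : ∀ i : Fin k, ∀ t ∈ Set.Ici (0 : ℝ),
      HasDerivWithinAt (f i)
        (∑ j : Fin k, (γ i j : ℝ) * Real.sin (f j t - f i t - α)) (Set.Ici 0) t) :
    IsKuramotoSol G α (fun p => f (P p)) := by
  intro p t ht
  have h := hf (P p) t ht
  have e : kuramotoDeriv G α (fun p => f (P p)) p t
      = ∑ j : Fin k, (γ (P p) j : ℝ) * Real.sin (f j t - f (P p) t - α) := by
    unfold kuramotoDeriv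
    rw [← Finset.sum_fiberwise Finset.univ P]
    refine Finset.sum_congr rfl fun m _ => ?_
    rw [← hγ p m, ← nsmul_eq_mul, ← Finset.sum_const, ← Finset.sum_filter,
      Finset.filter_filter]
    have hs : (Finset.univ.filter fun w => P w = m ∧ G.Adj p w)
        = Finset.univ.filter fun w => G.Adj p w ∧ P w = m := by
      ext w
      simp [and_comm]
    rw [hs]
    refine Finset.sum_congr rfl fun w hw => ?_
    beta_reduce
    rw [(Finset.mem_filter.mp hw).2.2]
  rw [e]
  exact h
end

section
/- Let α ∈ (0, π/2) and β ∈ ℝ be such that sin(α+β) > 0, and set μ_1 = sin(β)/sin(α) and μ_2 = −sin(2α+β)/sin(α). Then |μ_1 + μ_2| < 2, μ_1 > μ_2, and α = arctan( √(4 − (μ_1+μ_2)²) / (μ_1 − μ_2) ). -/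
/-- **Remark (recovering α from μ₁, μ₂).** For `α ∈ (0, π/2)` and `β ∈ ℝ` with
`sin(α + β) > 0`, setting `μ₁ = sin β / sin α` and `μ₂ = -sin(2α + β) / sin α`,
one has `|μ₁ + μ₂| < 2`, `μ₁ > μ₂`, and
`α = arctan(√(4 - (μ₁ + μ₂)²) / (μ₁ - μ₂))`. -/
theorem alpha_from_mu (α β : ℝ) (hα : α ∈ Set.Ioo 0 (Real.pi / 2))
    (hβ : Real.sin (α + β) > 0)
    (μ₁ μ₂ : ℝ) (hμ₁ : μ₁ = Real.sin β / Real.sin α)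
    (hμ₂ : μ₂ = -Real.sin (2 * α + β) / Real.sin α) :
    |μ₁ + μ₂| < 2 ∧ μ₁ > μ₂ ∧
    α = Real.arctan (Real.sqrt (4 - (μ₁ + μ₂) ^ 2) / (μ₁ - μ₂)) := by
  obtain ⟨h0, h1⟩ := hα
  have hs : 0 < Real.sin α := Real.sin_pos_of_pos_of_lt_pi h0 (by linarith [Real.pi_pos])
  have hc : 0 < Real.cos α := Real.cos_pos_of_mem_Ioo ⟨by linarith, h1⟩
  have e1 : Real.sin β = Real.sin (α + β) * Real.cos α - Real.cos (α + β) * Real.sin α := by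
    rw [← Real.sin_sub]; congr 1; ring
  have e2 : Real.sin (2 * α + β) =
      Real.sin (α + β) * Real.cos α + Real.cos (α + β) * Real.sin α := by
    rw [← Real.sin_add]; congr 1; ring
  have hsum : μ₁ + μ₂ = -2 * Real.cos (α + β) := by
    rw [hμ₁, hμ₂, e1, e2]; field_simp; ring
  have hdiff : μ₁ - μ₂ = 2 * Real.sin (α + β) * Real.cos α / Real.sin α := by
    rw [hμ₁, hμ₂, e1, e2]; field_simp; ring
  have hsq := Real.sin_sq_add_cos_sq (α + β)
  have hpos : 0 < μ₁ - μ₂ := by rw [hdiff]; positivity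
  refine ⟨?_, by linarith, ?_⟩
  · rw [hsum]
    apply abs_lt_of_sq_lt_sq _ (by norm_num)
    nlinarith [pow_pos hβ 2]
  · have h4 : 4 - (μ₁ + μ₂) ^ 2 = (2 * Real.sin (α + β)) ^ 2 := by
      rw [hsum]; nlinarith
    have ht : 2 * Real.sin (α + β) / (μ₁ - μ₂) = Real.tan α := by
      have := hβ.ne'
      rw [hdiff, Real.tan_eq_sin_div_cos]; field_simp
    rw [h4, Real.sqrt_sq (by linarith), ht, Real.arctan_tan (by linarith) h1]
end

section
/- Let G be a connected finite simple graph on n vertices with a bipartition S_1 ∪ S_2 of its vertex set, and suppose there exist scalars μ_1, μ_2, r with |μ_1 + μ_2| < 2 and μ_1 > μ_2 such that −δ_{i,1} + μ_1 δ_{i,2} = r for all i ∈ S_1 and −δ_{j,2} + μ_2 δ_{j,1} = r for all j ∈ S_2. Let α = arctan( √(4 − (μ_1+μ_2)²) / (μ_1 − μ_2) ) and β = arccos(−(μ_1+μ_2)/2) − α. Then for any scalar c, the functions θ_i(t) = c + r sin(α) t for i ∈ S_1 and θ_j(t) = c + r sin(α) t + α + β for j ∈ S_2 form a solution of the frustrated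 Kuramoto model on G with parameter α. In particular, if in addition S_1 ∪ S_2 is not an equitable partition, then S_1 ∪ S_2 is an α-Kuramoto bipartition of G for this value of α. -/
open scoped Classical

/-- The number of neighbours of `i` lying in the vertex set `S`. -/
noncomputable def degIn {n : ℕ} (G : SimpleGraph (Fin n)) (S : Finset (Fin n))
    (i : Fin n) : ℕ :=
  (S.filter fun j => G.Adj i j).card

/-- The bipartition `S ∪ Sᶜ` is equitable. -/
def IsEquitableBip {n : ℕ} (G : SimpleGraph (Fin n)) (S : Finset (Fin n)) : Prop :=
  ∀ u v : Fin n, (u ∈ S ↔ v ∈ S) →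
    degIn G S u = degIn G S v ∧ degIn G Sᶜ u = degIn G Sᶜ v

/-- The bipartition `S ∪ Sᶜ` is an `α`-Kuramoto bipartition: there is a solution of the
frustrated Kuramoto model whose phases agree on `[0, ∞)` exactly within the parts. -/
def IsAlphaKuramotoBip {n : ℕ} (G : SimpleGraph (Fin n)) (α : ℝ)
    (S : Finset (Fin n)) : Prop :=
  ∃ θ : Fin n → ℝ → ℝ, IsKuramotoSol G α θ ∧
    (∀ i j : Fin n, (i ∈ S ↔ j ∈ S) → Set.EqOn (θ i) (θ j) (Set.Ici 0)) ∧
    (∀ i j : Fin n, i ∈ S → j ∉ S → ¬ Set.EqOn (θ i) (θ j) (Set.Ici 0))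

theorem aux_sum {n : ℕ} (G : SimpleGraph (Fin n)) (S : Finset (Fin n)) (i : Fin n) (a b : ℝ) :
    (∑ j : Fin n, if G.Adj i j then (if j ∈ S then a else b) else 0)
      = (degIn G S i : ℝ) * a + (degIn G Sᶜ i : ℝ) * b := by
  rw [← Finset.sum_add_sum_compl S]
  unfold degIn
  congr 1
  · rw [← nsmul_eq_mul, ← Finset.sum_const, Finset.sum_filter]
    refine Finset.sum_congr rfl fun j hj => ?_
    simp [hj]
  · rw [← nsmul_eq_mul, ← Finset.sum_const, Finset.sum_filter]
    refine Finset.sum_congr rfl fun j hj => ?_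
    simp [Finset.mem_compl.1 hj]

/-- **Theorem (condition 2 gives an explicit solution and an α-Kuramoto bipartition).**
If the bipartition `S ∪ Sᶜ` of a connected graph satisfies
`-δ_{i,1} + μ₁ δ_{i,2} = r` on `S` and `-δ_{j,2} + μ₂ δ_{j,1} = r` on `Sᶜ`, with
`|μ₁ + μ₂| < 2` and `μ₁ > μ₂`, and `α = arctan(√(4 - (μ₁+μ₂)²)/(μ₁-μ₂))`,
`β = arccos(-(μ₁+μ₂)/2) - α`, then for any `c` the phases
`θᵢ(t) = c + r sin(α) t` (`i ∈ S`) and `θⱼ(t) = c + r sin(α) t + α + β` (`j ∉ S`)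
solve the frustrated Kuramoto model; in particular, if the bipartition is not
equitable, it is an `α`-Kuramoto bipartition. -/
theorem condition2_solution {n : ℕ} (G : SimpleGraph (Fin n)) (hconn : G.Connected)
    (S : Finset (Fin n)) (hS : S.Nonempty) (hSc : Sᶜ.Nonempty)
    (μ₁ μ₂ r : ℝ) (hsum : |μ₁ + μ₂| < 2) (hlt : μ₂ < μ₁)
    (h1 : ∀ i ∈ S, -(degIn G S i : ℝ) + μ₁ * (degIn G Sᶜ i : ℝ) = r)
    (h2 : ∀ j ∈ Sᶜ, -(degIn G Sᶜ j : ℝ) + μ₂ * (degIn G S j : ℝ) = r)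
    (α β : ℝ)
    (hα : α = Real.arctan (Real.sqrt (4 - (μ₁ + μ₂) ^ 2) / (μ₁ - μ₂)))
    (hβ : β = Real.arccos (-(μ₁ + μ₂) / 2) - α) :
    (∀ c : ℝ, IsKuramotoSol G α (fun i t =>
        if i ∈ S then c + r * Real.sin α * t else c + r * Real.sin α * t + α + β)) ∧
    (¬ IsEquitableBip G S → IsAlphaKuramotoBip G α S) := by
  have hab := abs_lt.1 hsum
  have hγ : α + β = Real.arccos (-(μ₁ + μ₂) / 2) := by rw [hβ]; ring
  have hcos : Real.cos (α + β) = -(μ₁ + μ₂) / 2 := by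
    rw [hγ, Real.cos_arccos] <;> linarith
  have hsin : Real.sin (α + β) = Real.sqrt (4 - (μ₁ + μ₂) ^ 2) / 2 := by
    rw [hγ, Real.sin_arccos]
    have : 1 - (-(μ₁ + μ₂) / 2) ^ 2 = (4 - (μ₁ + μ₂) ^ 2) / 2 ^ 2 := by ring
    rw [this, Real.sqrt_div' _ (by norm_num), Real.sqrt_sq (by norm_num)]
  have hd : μ₁ - μ₂ ≠ 0 := by linarith
  have hca : Real.cos α ≠ 0 := by
    rw [hα]; exact (Real.cos_arctan_pos _).ne'
  have htan : Real.tan α = Real.sqrt (4 - (μ₁ + μ₂) ^ 2) / (μ₁ - μ₂) := by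
    rw [hα, Real.tan_arctan]
  have key : Real.sin (α + β) * Real.cos α = (μ₁ - μ₂) / 2 * Real.sin α := by
    rw [Real.tan_eq_sin_div_cos, div_eq_div_iff hca hd] at htan
    rw [hsin]; linarith
  have e1 : Real.sin (α + β - α) = μ₁ * Real.sin α := by
    rw [Real.sin_sub, key, hcos]; ring
  have e2 : Real.sin (-(α + β) - α) = μ₂ * Real.sin α := by
    rw [Real.sin_sub, Real.sin_neg, Real.cos_neg, neg_mul, key, hcos]; ring
  have hne : α + β ≠ 0 := by
    rw [hγ]
    exact (Real.arccos_pos.2 (by linarith)).ne'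
  have main : ∀ c : ℝ, IsKuramotoSol G α (fun i t =>
      if i ∈ S then c + r * Real.sin α * t else c + r * Real.sin α * t + α + β) := by
    intro c i t _
    have hval : kuramotoDeriv G α (fun i t =>
        if i ∈ S then c + r * Real.sin α * t else c + r * Real.sin α * t + α + β) i t
        = r * Real.sin α := by
      unfold kuramotoDeriv
      by_cases hi : i ∈ S
      · have := aux_sum G S i (-Real.sin α) (μ₁ * Real.sin α)
        rw [← h1 i hi]
        trans
        swap
        · exact this.trans (by ring)
        refine Finset.sum_congr rfl fun j _ => ?_
        by_cases hj : j ∈ S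
        · simp only [hi, hj, if_true]
          rw [sub_self, zero_sub, Real.sin_neg]
        · simp only [hi, hj, if_true, if_false]
          rw [← e1]
          congr 2
          ring
      · have := aux_sum G S i (μ₂ * Real.sin α) (-Real.sin α)
        rw [← h2 i (Finset.mem_compl.2 hi)]
        trans
        swap
        · exact this.trans (by ring)
        refine Finset.sum_congr rfl fun j _ => ?_
        by_cases hj : j ∈ S
        · simp only [hi, hj, if_true, if_false]
          rw [← e2]
          congr 2
          ring
        · simp only [hi, hj, if_false]
          rw [sub_self, zero_sub, Real.sin_neg]
    rw [hval]
    have h0 : HasDerivAt (fun t : ℝ => c + r * Real.sin α * t) (r * Real.sin α) t := by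
      simpa using ((hasDerivAt_id t).const_mul (r * Real.sin α)).const_add c
    by_cases hi : i ∈ S
    · simp only [hi, if_true]
      exact h0.hasDerivWithinAt
    · simp only [hi, if_false]
      exact ((h0.add_const α).add_const β).hasDerivWithinAt
  refine ⟨main, fun _ => ⟨_, main 0, ?_, ?_⟩⟩
  · intro i j hij t _
    simp only [hij]
  · intro i j hi hj h
    have := h (Set.mem_Ici.2 (le_refl (0 : ℝ)))
    simp only [hi, hj, if_true, if_false] at this
    apply hne
    linarith
end

section
/- There exist a connected finite simple graph G, a parameter α ∈ (0, π/2), and an α-Kuramoto partition of G that is not an orbit partition of G. -/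
open scoped Classical

/-- The partition given by the fibres of `P` is an orbit partition: there is a graph
automorphism of `G` whose orbits are exactly the parts. -/
def IsOrbitPartition {n k : ℕ} (G : SimpleGraph (Fin n)) (P : Fin n → Fin k) : Prop :=
  ∃ π : G ≃g G, ∀ i j : Fin n, P i = P j ↔ ∃ m : ℕ, (⇑π)^[m] i = j

/-- Adjacency of the complement of the disjoint union of a triangle and a 4-cycle. -/
def kAdj (i j : Fin 7) : Bool :=
  (decide (i.val < 3) != decide (j.val < 3)) ||
    (decide (3 ≤ i.val) && decide (3 ≤ j.val) && decide (i.val ≠ j.val) &&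
      decide (i.val % 2 = j.val % 2))

/-- A 4-regular connected graph on 7 vertices that is not vertex transitive. -/
def kGraph : SimpleGraph (Fin 7) where
  Adj i j := kAdj i j = true
  symm := ⟨by decide⟩
  loopless := ⟨by decide⟩

theorem kGraph_connected : kGraph.Connected := by
  have h0 : ∀ v : Fin 7, kGraph.Reachable 0 v := by
    have hb : ∀ v : Fin 7, kAdj 0 v = true ∨ (kAdj 0 3 = true ∧ kAdj 3 v = true) := by decide
    intro v
    rcases hb v with h | ⟨h, h'⟩
    · exact SimpleGraph.Adj.reachable (G := kGraph) h
    · exact (SimpleGraph.Adj.reachable (G := kGraph) h).trans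
        (SimpleGraph.Adj.reachable (G := kGraph) h')
  exact ⟨fun u v => (h0 u).symm.trans (h0 v)⟩

theorem kGraph_deriv (α : ℝ) (f : ℝ → ℝ) (i : Fin 7) (t : ℝ) :
    kuramotoDeriv kGraph α (fun _ => f) i t = 4 * Real.sin (-α) := by
  have h : ∀ j, kGraph.Adj i j ↔ kAdj i j = true := fun j => Iff.rfl
  simp only [kuramotoDeriv, h, sub_self, zero_sub]
  fin_cases i <;> simp [Fin.sum_univ_succ, kAdj] <;> ring

/-- The vertex lies in an independent set of size three. -/
def kT (v : Fin 7) : Prop :=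
  ∃ a b : Fin 7, v ≠ a ∧ v ≠ b ∧ a ≠ b ∧
    ¬ kGraph.Adj v a ∧ ¬ kGraph.Adj v b ∧ ¬ kGraph.Adj a b

theorem kT_map (π : kGraph ≃g kGraph) (v : Fin 7) (h : kT v) : kT (π v) := by
  obtain ⟨a, b, h1, h2, h3, h4, h5, h6⟩ := h
  exact ⟨π a, π b, π.injective.ne h1, π.injective.ne h2, π.injective.ne h3,
    fun h => h4 (π.map_adj_iff.1 h), fun h => h5 (π.map_adj_iff.1 h),
    fun h => h6 (π.map_adj_iff.1 h)⟩

theorem kT_zero : kT 0 := by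
  have h : (0 : Fin 7) ≠ 1 ∧ (0 : Fin 7) ≠ 2 ∧ (1 : Fin 7) ≠ 2 ∧
    ¬ kAdj 0 1 = true ∧ ¬ kAdj 0 2 = true ∧ ¬ kAdj 1 2 = true := by decide
  exact ⟨1, 2, h⟩

theorem not_kT_three : ¬ kT 3 := by
  have h : ¬ ∃ a b : Fin 7, 3 ≠ a ∧ 3 ≠ b ∧ a ≠ b ∧
    ¬ kAdj 3 a = true ∧ ¬ kAdj 3 b = true ∧ ¬ kAdj a b = true := by decide
  exact h

/-- **Proposition.** Not every `α`-Kuramoto partition is an orbit partition: there exist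
a connected finite simple graph `G`, a parameter `α ∈ (0, π/2)`, and an `α`-Kuramoto
partition of `G` that is not an orbit partition of `G`. -/
theorem exists_alphaKuramoto_not_orbit :
    ∃ (n k : ℕ) (G : SimpleGraph (Fin n)) (α : ℝ) (P : Fin n → Fin k),
      G.Connected ∧ α ∈ Set.Ioo 0 (Real.pi / 2) ∧ Function.Surjective P ∧
      IsAlphaKuramoto G α P ∧ ¬ IsOrbitPartition G P := by
  refine ⟨7, 1, kGraph, 1, fun _ => 0, kGraph_connected,
    ⟨one_pos, by linarith [Real.pi_gt_three]⟩, fun y => ⟨0, Subsingleton.elim _ _⟩,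
    ⟨fun _ t => 4 * Real.sin (-1) * t, ?_, fun _ _ _ _ _ => rfl, fun _ _ h => absurd rfl h⟩, ?_⟩
  · intro i t _
    rw [kGraph_deriv]
    simpa using ((hasDerivAt_id t).const_mul (4 * Real.sin (-1))).hasDerivWithinAt
  · rintro ⟨π, h⟩
    obtain ⟨m, hm⟩ := (h 0 3).1 rfl
    have key : ∀ m : ℕ, kT ((⇑π)^[m] 0) := by
      intro m
      induction m with
      | zero => exact kT_zero
      | succ m ih =>
        rw [Function.iterate_succ_apply']
        exact kT_map π _ ih
    exact not_kT_three (hm ▸ key m)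
end

section
/- Let p ≥ 4 be even and let G be the graph on 2p+1 vertices whose adjacency matrix is the block matrix [[0, 1_p^T, 0_p^T],[1_p, 0_{p×p}, I_p],[0_p, I_p, B]], where B is the adjacency matrix of p/2 independent edges (a perfect matching on p vertices). Let α = arctan(√(3p² − 4p − 4)/(p − 2)) and let β = arccos((p+2)/(2p)) − α. Then the functions θ_1(t) = p sin(β) t and θ_j(t) = arccos((p+2)/(2p)) + p sin(β) t for j = 2,…,2p+1 form a solution of the frustrated Kuramoto model on G with parameter α. -/
open scoped Classical

/-- Adjacency (on 0-based natural-number labels) of the graph on `2p+1` vertices whose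
adjacency matrix is the block matrix `[[0, 1ₚᵀ, 0ₚᵀ], [1ₚ, 0ₚₓₚ, Iₚ], [0ₚ, Iₚ, B]]`,
where `B` is the adjacency matrix of `p/2` independent edges (pairing vertices
`p+1, p+2`, then `p+3, p+4`, etc.). Vertex `0` is the hub, vertices `1,…,p` the middle
layer, vertices `p+1,…,2p` the outer layer. -/
def linearAdj (p a b : ℕ) : Prop :=
  (a = 0 ∧ 1 ≤ b ∧ b ≤ p) ∨ (b = 0 ∧ 1 ≤ a ∧ a ≤ p) ∨
  (1 ≤ a ∧ a ≤ p ∧ b = a + p) ∨ (1 ≤ b ∧ b ≤ p ∧ a = b + p) ∨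
  (p + 1 ≤ a ∧ (a - p) % 2 = 1 ∧ b = a + 1) ∨
  (p + 1 ≤ b ∧ (b - p) % 2 = 1 ∧ a = b + 1)

lemma two_sum {n : ℕ} (P : Fin n → Prop) (f : Fin n → ℝ) (a b : Fin n) (hab : a ≠ b)
    (h : ∀ j, P j ↔ (j = a ∨ j = b)) :
    (∑ j : Fin n, if P j then f j else 0) = f a + f b := by
  rw [← Finset.sum_filter]
  have : Finset.univ.filter P = {a, b} := by
    ext j; simp [h]
  rw [this, Finset.sum_pair hab]

lemma hub_sum (p : ℕ) (x : ℝ) :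
    (∑ j : Fin (2 * p + 1), if (1 ≤ (j : ℕ) ∧ (j : ℕ) ≤ p) then x else 0) = p * x := by
  rw [Fin.sum_univ_eq_sum_range (fun j => if (1 ≤ j ∧ j ≤ p) then x else 0) (2 * p + 1),
    ← Finset.sum_filter]
  have : (Finset.range (2 * p + 1)).filter (fun j => 1 ≤ j ∧ j ≤ p) = Finset.Icc 1 p := by
    ext j; simp; omega
  rw [this]; simp

lemma trig_facts (p : ℕ) (hp : 4 ≤ p) (α c : ℝ)
    (hα : α = Real.arctan (Real.sqrt (3 * (p : ℝ) ^ 2 - 4 * p - 4) / ((p : ℝ) - 2)))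
    (hc : c = Real.arccos (((p : ℝ) + 2) / (2 * p))) :
    (p : ℝ) * Real.sin (c - α) = - 2 * Real.sin α ∧ Real.sin (c + α) = Real.sin α := by
  have hp' : (4 : ℝ) ≤ p := by exact_mod_cast hp
  have h0 : (0 : ℝ) < p := by linarith
  set s := Real.sqrt (3 * (p : ℝ) ^ 2 - 4 * p - 4) with hs
  have h2 : (p : ℝ) - 2 ≠ 0 := by linarith
  have hsa : Real.sin α * (p - 2) = s * Real.cos α := by
    have h1 : Real.tan α = s / (p - 2) := by rw [hα, Real.tan_arctan]
    have h3 : Real.cos α ≠ 0 := by rw [hα]; exact (Real.cos_arctan_pos _).ne'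
    rw [Real.tan_eq_sin_div_cos, div_eq_div_iff h3 h2] at h1
    exact h1
  have hcc : Real.cos c = (p + 2) / (2 * p) := by
    rw [hc]
    apply Real.cos_arccos
    · have : (0 : ℝ) ≤ (p + 2) / (2 * p) := by positivity
      linarith
    · rw [div_le_one (by positivity)]; linarith
  have hsc : Real.sin c = s / (2 * p) := by
    rw [hc, Real.sin_arccos, hs]
    have : 1 - (((p : ℝ) + 2) / (2 * p)) ^ 2 = (3 * (p : ℝ) ^ 2 - 4 * p - 4) / (2 * p) ^ 2 := by
      field_simp; ring
    rw [this, Real.sqrt_div' _ (by positivity), Real.sqrt_sq (by positivity)]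
  rw [Real.sin_sub, Real.sin_add, hcc, hsc]
  constructor
  · field_simp
    linear_combination -hsa
  · field_simp
    linear_combination -hsa

/-- **Example.** For even `p ≥ 4` and the block-matrix graph above, with
`α = arctan(√(3p² - 4p - 4)/(p - 2))` and `β = arccos((p+2)/(2p)) - α`, the phases
`θ₀(t) = p sin(β) t` and `θⱼ(t) = arccos((p+2)/(2p)) + p sin(β) t` for `j ≠ 0` solve
the frustrated Kuramoto model with parameter `α`. -/
theorem linear_example_solution (p : ℕ) (hp : 4 ≤ p) (hpe : Even p)
    (G : SimpleGraph (Fin (2 * p + 1)))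
    (hG : ∀ a b : Fin (2 * p + 1), G.Adj a b ↔ linearAdj p (a : ℕ) (b : ℕ))
    (α β : ℝ)
    (hα : α = Real.arctan (Real.sqrt (3 * (p : ℝ) ^ 2 - 4 * p - 4) / ((p : ℝ) - 2)))
    (hβ : β = Real.arccos (((p : ℝ) + 2) / (2 * p)) - α) :
    IsKuramotoSol G α (fun i t =>
      if (i : ℕ) = 0 then (p : ℝ) * Real.sin β * t
      else Real.arccos (((p : ℝ) + 2) / (2 * p)) + (p : ℝ) * Real.sin β * t) := by
  intro i t _
  obtain ⟨c, hc⟩ : ∃ c, c = Real.arccos (((p : ℝ) + 2) / (2 * p)) := ⟨_, rfl⟩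
  obtain ⟨h1, h2⟩ := trig_facts p hp α c hα hc
  rw [← hc] at hβ ⊢
  rw [← hβ] at h1
  have key : kuramotoDeriv G α (fun i t =>
      if (i : ℕ) = 0 then (p : ℝ) * Real.sin β * t
      else c + (p : ℝ) * Real.sin β * t) i t = p * Real.sin β := by
    unfold kuramotoDeriv
    obtain ⟨k, hk⟩ := hpe
    have hi := i.isLt
    by_cases i0 : (i : ℕ) = 0
    · refine Eq.trans ?_ (hub_sum p (Real.sin β))
      apply Finset.sum_congr rfl
      intro j _
      have : G.Adj i j ↔ (1 ≤ (j : ℕ) ∧ (j : ℕ) ≤ p) := by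
        rw [hG]; unfold linearAdj; omega
      by_cases hj : (1 ≤ (j : ℕ) ∧ (j : ℕ) ≤ p)
      · beta_reduce
        rw [if_pos (this.2 hj), if_pos hj, if_pos i0, if_neg (by omega), hβ]
        congr 1; ring
      · rw [if_neg (fun h => hj (this.1 h)), if_neg hj]
    · refine Eq.trans ?_ h1.symm
      by_cases ip : (i : ℕ) ≤ p
      · rw [two_sum (G.Adj i) _ ⟨0, by omega⟩ ⟨i + p, by omega⟩
          (by simp only [ne_eq, Fin.mk.injEq]; omega)
          (by intro j; rw [hG]; unfold linearAdj; simp only [Fin.ext_iff]; omega)]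
        simp only [if_true]
        rw [if_neg i0, if_neg (by omega)]
        have e1 : (p : ℝ) * Real.sin β * t - (c + p * Real.sin β * t) - α = -(c + α) := by ring
        have e2 : c + (p : ℝ) * Real.sin β * t - (c + p * Real.sin β * t) - α = -α := by ring
        rw [e1, e2, Real.sin_neg, Real.sin_neg, h2]; ring
      · have e2 : c + (p : ℝ) * Real.sin β * t - (c + p * Real.sin β * t) - α = -α := by ring
        by_cases io : ((i : ℕ) - p) % 2 = 1
        · rw [two_sum (G.Adj i) _ ⟨i - p, by omega⟩ ⟨i + 1, by omega⟩
            (by simp only [ne_eq, Fin.mk.injEq]; omega)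
            (by intro j; rw [hG]; unfold linearAdj; simp only [Fin.ext_iff]; omega)]
          simp only []
          rw [if_neg i0, if_neg (by omega), if_neg (by omega), e2, Real.sin_neg]; ring
        · rw [two_sum (G.Adj i) _ ⟨i - p, by omega⟩ ⟨i - 1, by omega⟩
            (by simp only [ne_eq, Fin.mk.injEq]; omega)
            (by intro j; rw [hG]; unfold linearAdj; simp only [Fin.ext_iff]; omega)]
          simp only []
          rw [if_neg i0, if_neg (by omega), if_neg (by omega), e2, Real.sin_neg]; ring
  rw [key]
  apply HasDerivAt.hasDerivWithinAt
  have hl : HasDerivAt (fun t : ℝ => (p : ℝ) * Real.sin β * t) (p * Real.sin β) t := by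
    simpa using (hasDerivAt_id t).const_mul ((p : ℝ) * Real.sin β)
  by_cases i0 : (i : ℕ) = 0
  · simp only [i0, if_true]; exact hl
  · simp only [i0, if_false]; exact hl.const_add c
end
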